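/- arXiv:2507.23468 — 2 statements merged into one kernel-verified Lean document; each statement's English description precedes it below -/
import Mathlib

section
/- For $m,n\in\mathbb N$ let $L_{m,n}(z,w)=\sum_{j=0}^{\min(m,n)}\frac{(-1)^j\,m!\,n!}{j!\,(m-j)!\,(n-j)!}\,z^{m-j}w^{n-j}$ denote the two-dimensional Laguerre polynomial. For all real numbers $s>1$, $t$ with $0\le t<s$, and $x\ge 0$, the double series $$\sum_{m\ge0}t^m\sum_{n\ge0}\frac1{s^n}\,\frac{e^{-x^2}}{m!\,n!}\,L_{m,n}(x,x)^2$$ converges (each inner series over $n$ converges, and so does the outer series over $m$) and equals $$\frac{s}{s-t}\,\exp\!\left(-(s-1)\,x^2\left(\frac1s-\frac{t(s-1)}{s(s-t)}\right)\right).$$ -/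
/-- The two-dimensional Laguerre polynomial
`L_{m,n}(z,w) = ∑_{j=0}^{min(m,n)} (-1)^j m! n! / (j! (m-j)! (n-j)!) z^(m-j) w^(n-j)`,
for real or complex arguments. In the range of the sum `j ≤ m` and `j ≤ n`, so the
natural-number subtractions are exact. -/
noncomputable def laguerre2D {𝕜 : Type*} [RCLike 𝕜] (m n : ℕ) (z w : 𝕜) : 𝕜 :=
  ∑ j ∈ Finset.range (min m n + 1),
    (-1 : 𝕜) ^ j * (m.factorial : 𝕜) * (n.factorial : 𝕜) /
        ((j.factorial : 𝕜) * ((m - j).factorial : 𝕜) * ((n - j).factorial : 𝕜)) *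
      z ^ (m - j) * w ^ (n - j)

theorem HasSum.congr_val {ι : Type*} {f : ι → ℝ} {a b : ℝ} (h : HasSum f a) (e : b = a) :
    HasSum f b := e ▸ h

/-- Vandermonde's identity, in the form of the linearization of a product of falling factorials. -/
theorem Nat.descFactorial_mul_descFactorial_eq_sum (n j k : ℕ) :
    n.descFactorial j * n.descFactorial k =
      ∑ i ∈ Finset.range (k + 1),
        i.factorial * j.choose i * k.choose i * n.descFactorial (j + (k - i)) := by
  rcases lt_or_ge n j with h | h
  · rw [Nat.descFactorial_of_lt h, zero_mul]
    refine (Finset.sum_eq_zero fun i _ => ?_).symm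
    rw [Nat.descFactorial_of_lt (by omega), mul_zero]
  · obtain ⟨p, rfl⟩ := Nat.exists_eq_add_of_le h
    rw [Nat.descFactorial_eq_factorial_mul_choose (j + p) k, Nat.add_choose_eq,
      Finset.Nat.sum_antidiagonal_eq_sum_range_succ_mk, Finset.mul_sum, Finset.mul_sum]
    refine Finset.sum_congr rfl fun i hi => ?_
    have hik : i ≤ k := Nat.lt_succ_iff.mp (Finset.mem_range.mp hi)
    have h1 : (j + p).descFactorial (j + (k - i)) =
        p.descFactorial (k - i) * (j + p).descFactorial j := by
      have := Nat.descFactorial_mul_descFactorial (n := j + p) (k := j) (m := j + (k - i))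
        (Nat.le_add_right _ _)
      simpa using this.symm
    rw [h1, Nat.descFactorial_eq_factorial_mul_choose p,
      ← Nat.choose_mul_factorial_mul_factorial hik]
    ring

/-- The exponential series differentiated termwise `r` times. -/
theorem hasSum_pow_div_factorial_mul_descFactorial (q y : ℝ) (r : ℕ) :
    HasSum (fun n : ℕ => q ^ n / n.factorial * (n.descFactorial r * y ^ (n - r)))
      (q ^ r * Real.exp (q * y)) := by
  rw [← hasSum_nat_add_iff' r, Finset.sum_eq_zero, sub_zero]
  · have h : HasSum (fun l : ℕ => (q * y) ^ l / l.factorial) (Real.exp (q * y)) := by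
      rw [Real.exp_eq_exp_ℝ]
      exact NormedSpace.expSeries_div_hasSum_exp (q * y)
    refine (h.mul_left (q ^ r)).congr_fun fun l => ?_
    have h2 := Nat.factorial_mul_descFactorial (n := l + r) (k := r) (Nat.le_add_left _ _)
    rw [Nat.add_sub_cancel] at h2 ⊢
    rw [← h2]
    have h3 : ((l + r).descFactorial r : ℝ) ≠ 0 := by
      exact_mod_cast (Nat.descFactorial_pos.mpr (Nat.le_add_left _ _)).ne'
    have h4 : (l.factorial : ℝ) ≠ 0 := by exact_mod_cast l.factorial_ne_zero
    push_cast
    field_simp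
    ring
  · intro i hi
    rw [Nat.descFactorial_of_lt (Finset.mem_range.mp hi)]
    simp

theorem hasSum_pow_div_factorial_mul_descFactorial_mul_descFactorial (q x : ℝ) {j k m : ℕ}
    (hk : k ≤ m) :
    HasSum (fun n : ℕ => q ^ n / n.factorial *
        ((n.descFactorial j * x ^ (n - j)) * (n.descFactorial k * x ^ (n - k))))
      (Real.exp (q * x ^ 2) * ∑ i ∈ Finset.range (m + 1), i.factorial * q ^ i *
        ((j.choose i * (q * x) ^ (j - i)) * (k.choose i * (q * x) ^ (k - i)))) := by
  have hsub : ∑ i ∈ Finset.range (m + 1), (i.factorial : ℝ) * q ^ i *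
        ((j.choose i * (q * x) ^ (j - i)) * (k.choose i * (q * x) ^ (k - i))) =
      ∑ i ∈ Finset.range (k + 1), (i.factorial : ℝ) * q ^ i *
        ((j.choose i * (q * x) ^ (j - i)) * (k.choose i * (q * x) ^ (k - i))) := by
    refine (Finset.sum_subset (Finset.range_mono (by omega)) fun i _ hi => ?_).symm
    rw [Nat.choose_eq_zero_of_lt (n := k) (by simpa using hi)]
    simp
  rw [hsub, Finset.mul_sum]
  refine (hasSum_sum (f := fun i n => (i.factorial * j.choose i * k.choose i : ℝ) *
    x ^ (j - i) * x ^ (k - i) * (q ^ n / n.factorial *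
      (n.descFactorial (j + (k - i)) * (x ^ 2) ^ (n - (j + (k - i)))))) fun i hi => ?_).congr_fun
    fun n => ?_
  · rcases lt_or_ge j i with h | h
    · simp [Nat.choose_eq_zero_of_lt h, hasSum_zero]
    · refine ((hasSum_pow_div_factorial_mul_descFactorial q (x ^ 2) (j + (k - i))).mul_left
        ((i.factorial * j.choose i * k.choose i : ℝ) * x ^ (j - i) * x ^ (k - i))).congr_val ?_
      obtain ⟨p, rfl⟩ := Nat.exists_eq_add_of_le h
      simp only [Nat.add_sub_cancel_left]
      ring
  · have h := Nat.descFactorial_mul_descFactorial_eq_sum n j k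
    have h' : (n.descFactorial j * n.descFactorial k : ℝ) = ∑ i ∈ Finset.range (k + 1),
        (i.factorial * j.choose i * k.choose i * n.descFactorial (j + (k - i)) : ℝ) := by
      exact_mod_cast h
    calc _ = q ^ n / n.factorial * (x ^ (n - j) * x ^ (n - k)) *
          (n.descFactorial j * n.descFactorial k : ℝ) := by ring
      _ = _ := by
        rw [h', Finset.mul_sum]
        refine Finset.sum_congr rfl fun i hi => ?_
        have hik : i ≤ k := Nat.lt_succ_iff.mp (Finset.mem_range.mp hi)
        rcases lt_or_ge j i with hij | hij
        · simp [Nat.choose_eq_zero_of_lt hij]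
        rcases lt_or_ge n (j + (k - i)) with hn | hn
        · simp [Nat.descFactorial_of_lt hn]
        have hx : x ^ (n - j) * x ^ (n - k) =
            x ^ (j - i) * x ^ (k - i) * (x ^ 2) ^ (n - (j + (k - i))) := by
          rw [← pow_mul, ← pow_add, ← pow_add, ← pow_add]
          congr 1
          omega
        rw [hx]
        ring

theorem laguerre2D_eq_sum_descFactorial (m n : ℕ) (x : ℝ) :
    laguerre2D m n x x = ∑ j ∈ Finset.range (m + 1),
      (-1) ^ j * m.choose j * x ^ (m - j) * (n.descFactorial j * x ^ (n - j)) := by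
  rw [laguerre2D]
  have hsub : Finset.range (min m n + 1) ⊆ Finset.range (m + 1) :=
    Finset.range_mono (by omega)
  rw [← Finset.sum_subset hsub]
  · refine Finset.sum_congr rfl fun j hj => ?_
    rw [Finset.mem_range] at hj
    have hjm : j ≤ m := by omega
    have hjn : j ≤ n := by omega
    rw [← Nat.choose_mul_factorial_mul_factorial hjm, ← Nat.factorial_mul_descFactorial hjn]
    have h1 : (j.factorial : ℝ) ≠ 0 := by exact_mod_cast j.factorial_ne_zero
    have h2 : ((m - j).factorial : ℝ) ≠ 0 := by exact_mod_cast (m - j).factorial_ne_zero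
    have h3 : ((n - j).factorial : ℝ) ≠ 0 := by exact_mod_cast (n - j).factorial_ne_zero
    push_cast
    field_simp
  · intro j hj hj'
    rw [Finset.mem_range] at hj hj'
    rw [Nat.descFactorial_of_lt (n := n) (by omega)]
    simp

/-- The binomial theorem differentiated `i` times. -/
theorem sum_neg_one_pow_mul_choose_mul_choose (q x : ℝ) {m i : ℕ} (hi : i ≤ m) :
    ∑ j ∈ Finset.range (m + 1),
        (-1) ^ j * m.choose j * x ^ (m - j) * (j.choose i * (q * x) ^ (j - i)) =
      (-1) ^ i * m.choose i * ((1 - q) * x) ^ (m - i) := by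
  obtain ⟨p, rfl⟩ := Nat.exists_eq_add_of_le hi
  rw [show i + p + 1 = i + (p + 1) by ring, Finset.sum_range_add, Finset.sum_eq_zero, zero_add]
  · rw [Nat.add_sub_cancel_left, show (1 - q) * x = -(q * x) + x by ring, add_pow, Finset.mul_sum]
    refine Finset.sum_congr rfl fun l hl => ?_
    rw [Finset.mem_range] at hl
    have h := Nat.choose_mul (n := i + p) (k := i + l) (s := i) (by omega)
    rw [Nat.add_sub_cancel_left, Nat.add_sub_cancel_left] at h
    have h' : ((i + p).choose (i + l) * (i + l).choose i : ℝ) =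
      (i + p).choose i * p.choose l := by exact_mod_cast h
    rw [Nat.add_sub_cancel_left, Nat.add_sub_add_left, neg_pow (q * x), pow_add]
    linear_combination (-1) ^ i * (-1) ^ l * x ^ (p - l) * (q * x) ^ l * h'
  · intro j hj
    rw [Nat.choose_eq_zero_of_lt (Finset.mem_range.mp hj)]
    simp

theorem hasSum_pow_div_factorial_mul_laguerre2D_sq (q x : ℝ) (m : ℕ) :
    HasSum (fun n : ℕ => q ^ n / n.factorial * laguerre2D m n x x ^ 2)
      (Real.exp (q * x ^ 2) * ∑ i ∈ Finset.range (m + 1),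
        i.factorial * q ^ i * (m.choose i * ((1 - q) * x) ^ (m - i)) ^ 2) := by
  set c : ℕ → ℝ := fun j => (-1) ^ j * m.choose j * x ^ (m - j) with hc
  set b : ℕ → ℕ → ℝ := fun i j => j.choose i * (q * x) ^ (j - i) with hb
  have key : HasSum (fun n : ℕ => ∑ j ∈ Finset.range (m + 1), ∑ k ∈ Finset.range (m + 1),
      c j * c k * (q ^ n / n.factorial *
        ((n.descFactorial j * x ^ (n - j)) * (n.descFactorial k * x ^ (n - k)))))
      (∑ j ∈ Finset.range (m + 1), ∑ k ∈ Finset.range (m + 1), c j * c k *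
        (Real.exp (q * x ^ 2) * ∑ i ∈ Finset.range (m + 1), i.factorial * q ^ i *
          (b i j * b i k))) :=
    hasSum_sum fun j _ => hasSum_sum fun k hk =>
      (hasSum_pow_div_factorial_mul_descFactorial_mul_descFactorial q x
        (Nat.lt_succ_iff.mp (Finset.mem_range.mp hk))).mul_left _
  convert key using 1
  · funext n
    rw [laguerre2D_eq_sum_descFactorial, sq, Finset.sum_mul_sum, Finset.mul_sum]
    refine Finset.sum_congr rfl fun j _ => ?_
    rw [Finset.mul_sum]
    refine Finset.sum_congr rfl fun k _ => ?_
    simp only [hc]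
    ring
  · have hsq : ∀ i ∈ Finset.range (m + 1),
        (i.factorial * q ^ i * (m.choose i * ((1 - q) * x) ^ (m - i)) ^ 2 : ℝ) =
        ∑ j ∈ Finset.range (m + 1), ∑ k ∈ Finset.range (m + 1),
          i.factorial * q ^ i * ((c j * b i j) * (c k * b i k)) := by
      intro i hi
      have h := sum_neg_one_pow_mul_choose_mul_choose q x
        (Nat.lt_succ_iff.mp (Finset.mem_range.mp hi))
      simp_rw [← Finset.mul_sum, ← Finset.sum_mul, ← sq]
      simp only [hc, hb]
      rw [h, mul_assoc ((-1) ^ i), mul_pow ((-1) ^ i), ← pow_mul, mul_comm i 2, pow_mul]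
      simp
    rw [Finset.sum_congr rfl hsq, Finset.sum_comm, Finset.mul_sum]
    refine Finset.sum_congr rfl fun j _ => ?_
    rw [Finset.sum_comm, Finset.mul_sum]
    refine Finset.sum_congr rfl fun k _ => ?_
    rw [Finset.mul_sum, Finset.mul_sum, Finset.mul_sum]
    refine Finset.sum_congr rfl fun i _ => ?_
    ring

theorem hasSum_laguerre2D_sq (q x : ℝ) (m : ℕ) :
    HasSum (fun n : ℕ => q ^ n * (Real.exp (-x ^ 2) / (m.factorial * n.factorial) *
        laguerre2D m n x x ^ 2))
      (Real.exp (-(1 - q) * x ^ 2) * ∑ i ∈ Finset.range (m + 1),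
        m.choose i * q ^ i * (((1 - q) ^ 2 * x ^ 2) ^ (m - i) / (m - i).factorial)) := by
  refine (((hasSum_pow_div_factorial_mul_laguerre2D_sq q x m).mul_left
    (Real.exp (-x ^ 2) / m.factorial)).congr_fun fun n => ?_).congr_val ?_
  · ring
  · rw [show -(1 - q) * x ^ 2 = -x ^ 2 + q * x ^ 2 by ring, Real.exp_add, div_mul_eq_mul_div,
      mul_comm (Real.exp (-x ^ 2)) (_ * _), mul_assoc, mul_assoc, mul_div_assoc]
    rw [mul_comm (Finset.sum _ _) (Real.exp (-x ^ 2)), mul_left_comm, mul_div_assoc,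
      Finset.sum_div]
    congr 2
    refine Finset.sum_congr rfl fun i hi => ?_
    have him : i ≤ m := Nat.lt_succ_iff.mp (Finset.mem_range.mp hi)
    have h1 : (i.factorial : ℝ) ≠ 0 := by exact_mod_cast i.factorial_ne_zero
    have h2 : ((m - i).factorial : ℝ) ≠ 0 := by exact_mod_cast (m - i).factorial_ne_zero
    have h3 : (m.choose i : ℝ) ≠ 0 := by exact_mod_cast (Nat.choose_pos him).ne'
    rw [← Nat.choose_mul_factorial_mul_factorial him, ← mul_pow (1 - q) x 2,
      pow_right_comm ((1 - q) * x) 2]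
    generalize ((1 - q) * x) ^ (m - i) = z
    push_cast
    field_simp

/-- Double generating function of the binomial coefficients, exponential in one variable and
ordinary in the other, summed along antidiagonals. -/
theorem hasSum_sum_choose_mul_pow_mul_pow_div_factorial {u v : ℝ} (hu0 : 0 ≤ u) (hu : u < 1)
    (hv : 0 ≤ v) :
    HasSum (fun m : ℕ => ∑ i ∈ Finset.range (m + 1),
        m.choose i * u ^ i * (v ^ (m - i) / (m - i).factorial))
      (1 / (1 - u) * Real.exp (v / (1 - u))) := by
  set f : ℕ × ℕ → ℝ := fun p => (p.1 + p.2).choose p.1 * u ^ p.2 * (v ^ p.1 / p.1.factorial) with hf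
  have hrow : ∀ l, HasSum (fun i => f (l, i))
      (1 / (1 - u) * ((v / (1 - u)) ^ l / l.factorial)) := by
    intro l
    have h := (hasSum_choose_mul_geometric_of_norm_lt_one l
      (r := u) (by rwa [Real.norm_of_nonneg hu0])).mul_right (v ^ l / l.factorial)
    refine (h.congr_fun fun i => ?_).congr_val ?_
    · simp [hf, add_comm]
    · rw [div_pow, pow_succ]
      field_simp
  have hcol : HasSum (fun l : ℕ => 1 / (1 - u) * ((v / (1 - u)) ^ l / l.factorial))
      (1 / (1 - u) * Real.exp (v / (1 - u))) := by
    refine HasSum.mul_left _ ?_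
    rw [Real.exp_eq_exp_ℝ]
    exact NormedSpace.expSeries_div_hasSum_exp (v / (1 - u))
  have hsum : Summable f := by
    refine (summable_prod_of_nonneg fun p => ?_).mpr ⟨fun l => (hrow l).summable, ?_⟩
    · simp only [hf, Pi.zero_apply]
      positivity
    · simpa only [(hrow _).tsum_eq] using hcol.summable
  have htot : HasSum f (1 / (1 - u) * Real.exp (v / (1 - u))) :=
    (hsum.hasSum.prod_fiberwise hrow).unique hcol ▸ hsum.hasSum
  have h := (Finset.HasAntidiagonal.sigmaAntidiagonalEquivProd.hasSum_iff.mpr htot).sigma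
    fun m => hasSum_fintype _
  refine h.congr_fun fun m => ?_
  rw [← Finset.Nat.sum_antidiagonal_eq_sum_range_succ_mk
    (fun p : ℕ × ℕ => (m.choose p.1 * u ^ p.1 * (v ^ p.2 / p.2.factorial) : ℝ)),
    ← Finset.Nat.sum_antidiagonal_swap, ← Finset.sum_coe_sort]
  refine Finset.sum_congr rfl fun p _ => ?_
  have hp := Finset.HasAntidiagonal.mem_antidiagonal.mp p.2
  simp [hf, Finset.HasAntidiagonal.sigmaAntidiagonalEquivProd, ← hp,
    Nat.choose_symm_add (a := p.1.1) (b := p.1.2)]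

theorem laguerre2D_double_series (s t x : ℝ) (hs : 1 < s) (ht0 : 0 ≤ t) (hts : t < s)
    (hx : 0 ≤ x) :
    (∀ m : ℕ, Summable fun n : ℕ =>
      (s ^ n)⁻¹ * (Real.exp (-x ^ 2) / ((m.factorial : ℝ) * (n.factorial : ℝ)) *
        laguerre2D m n x x ^ 2)) ∧
    HasSum
      (fun m : ℕ => t ^ m * ∑' n : ℕ,
        (s ^ n)⁻¹ * (Real.exp (-x ^ 2) / ((m.factorial : ℝ) * (n.factorial : ℝ)) *
          laguerre2D m n x x ^ 2))
      (s / (s - t) *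
        Real.exp (-(s - 1) * x ^ 2 * (1 / s - t * (s - 1) / (s * (s - t))))) := by
  have hs0 : 0 < s := by linarith
  have hst : s - t ≠ 0 := by linarith
  simp_rw [← inv_pow]
  refine ⟨fun m => (hasSum_laguerre2D_sq s⁻¹ x m).summable, ?_⟩
  simp_rw [(hasSum_laguerre2D_sq s⁻¹ x _).tsum_eq]
  have h := (hasSum_sum_choose_mul_pow_mul_pow_div_factorial (u := t * s⁻¹)
    (v := t * ((1 - s⁻¹) ^ 2 * x ^ 2)) (by positivity)
    (by rwa [← div_eq_mul_inv, div_lt_one hs0]) (by positivity)).mul_left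
      (Real.exp (-(1 - s⁻¹) * x ^ 2))
  have hu : 1 - t * s⁻¹ = (s - t) / s := by field_simp
  refine (h.congr_fun fun m => ?_).congr_val ?_
  · rw [mul_left_comm, Finset.mul_sum]
    congr 1
    refine Finset.sum_congr rfl fun i hi => ?_
    have him : i ≤ m := Nat.lt_succ_iff.mp (Finset.mem_range.mp hi)
    rw [mul_pow t s⁻¹, mul_pow t (_ * _), ← pow_mul_pow_sub t him]
    ring
  · rw [mul_left_comm, ← Real.exp_add, hu, one_div_div]
    congr 2
    field_simp
    ring
end

section
/- (Lax pair for the complex Calogero–Moser system.) Let $\omega\in\mathbb{C}$, $r\ge 1$, let $I\subseteq\mathbb{R}$ be an open interval, and let $\lambda_1,\dots,\lambda_r : I\to\mathbb{C}$ be twice differentiable functions that are pairwise distinct at every $t\in I$. Define the $r\times r$ complex matrix-valued functions $L(t)$ and $M(t)$ by $$L_{jk}(t) = (\lambda_j'(t)+i\omega\lambda_j(t))\,\delta_{jk} + i\,(1-\delta_{jk})\frac{1}{\lambda_j(t)-\lambda_k(t)},$$ $$M_{jk}(t) = \delta_{jk}\sum_{l\ne j}\frac{1}{(\lambda_j(t)-\lambda_l(t))^2}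 - (1-\delta_{jk})\frac{1}{(\lambda_j(t)-\lambda_k(t))^2}.$$ Then the equations of motion $$\lambda_k''(t)+\omega^2\lambda_k(t)=\sum_{m\ne k}\frac{2}{(\lambda_k(t)-\lambda_m(t))^3}\qquad (1\le k\le r,\ t\in I)$$ hold if and only if $L$ is differentiable on $I$ and $L'(t)+i[M(t),L(t)]-i\omega L(t)=0$ for every $t\in I$, where $[\cdot,\cdot]$ is the matrix commutator. -/
noncomputable section

/-- The equations of motion of the complex Calogero–Moser system with frequency `ω` on the
set of times `I`. -/
def CalogeroMoserEq {r : ℕ} (ω : ℂ) (I : Set ℝ) (lam : Fin r → ℝ → ℂ) : Prop :=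
  ∀ k : Fin r, ∀ t ∈ I,
    deriv (deriv (lam k)) t + ω ^ 2 * lam k t =
      ∑ m ∈ Finset.univ.erase k, 2 / (lam k t - lam m t) ^ 3

/-- `L_{jk} = (λ_j' + iω λ_j) δ_{jk} + i (1 - δ_{jk}) / (λ_j - λ_k)`. -/
def laxL {r : ℕ} (ω : ℂ) (lam : Fin r → ℝ → ℂ) (t : ℝ) : Matrix (Fin r) (Fin r) ℂ :=
  Matrix.of fun j k =>
    if j = k then deriv (lam j) t + Complex.I * ω * lam j t
    else Complex.I / (lam j t - lam k t)

/-- `M_{jk} = δ_{jk} ∑_{l ≠ j} 1 / (λ_j - λ_l)² - (1 - δ_{jk}) / (λ_j - λ_k)²`. -/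
def laxM {r : ℕ} (lam : Fin r → ℝ → ℂ) (t : ℝ) : Matrix (Fin r) (Fin r) ℂ :=
  Matrix.of fun j k =>
    if j = k then ∑ l ∈ Finset.univ.erase j, 1 / (lam j t - lam l t) ^ 2
    else -(1 / (lam j t - lam k t) ^ 2)

/-- The modified Lax equation `L' + i [M, L] - iω L = 0` on the set of times `I`;
differentiability of `L` on `I` is part of the assertion. -/
def ModifiedLaxEq {r : ℕ} (ω : ℂ) (I : Set ℝ) (L M : ℝ → Matrix (Fin r) (Fin r) ℂ) : Prop :=
  ∀ t ∈ I, ∃ L' : Matrix (Fin r) (Fin r) ℂ, HasDerivAt L L' t ∧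
    L' + Complex.I • (M t * L t - L t * M t) - (Complex.I * ω) • L t = 0

end

/-- The entrywise time derivative of `laxL`. -/
noncomputable def laxLDeriv {r : ℕ} (ω : ℂ) (lam : Fin r → ℝ → ℂ) (t : ℝ) :
    Matrix (Fin r) (Fin r) ℂ :=
  Matrix.of fun j k =>
    if j = k then deriv (deriv (lam j)) t + Complex.I * ω * deriv (lam j) t
    else -(Complex.I * (deriv (lam j) t - deriv (lam k) t)) / (lam j t - lam k t) ^ 2

theorem hasDerivAt_matrix_iff {m n : Type*} [Fintype m] [Fintype n] {A : ℝ → Matrix m n ℂ}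
    {A' : Matrix m n ℂ} {t : ℝ} :
    HasDerivAt A A' t ↔ ∀ i j, HasDerivAt (fun s => A s i j) (A' i j) t := by
  have h : HasDerivAt (fun s i j => A s i j : ℝ → m → n → ℂ) (fun i j => A' i j) t ↔
      ∀ i j, HasDerivAt (fun s => A s i j) (A' i j) t :=
    hasDerivAt_pi.trans (forall_congr' fun _ => hasDerivAt_pi)
  exact h

theorem hasDerivAt_laxL {r : ℕ} (ω : ℂ) {lam : Fin r → ℝ → ℂ} {t : ℝ}
    (h1 : ∀ k, DifferentiableAt ℝ (lam k) t) (h2 : ∀ k, DifferentiableAt ℝ (deriv (lam k)) t)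
    (hdist : ∀ j k, j ≠ k → lam j t ≠ lam k t) :
    HasDerivAt (laxL ω lam) (laxLDeriv ω lam t) t := by
  refine hasDerivAt_matrix_iff.2 fun j k => ?_
  by_cases hjk : j = k
  · simpa [laxL, laxLDeriv, hjk] using
      (h2 k).hasDerivAt.fun_add ((h1 k).hasDerivAt.const_mul (Complex.I * ω))
  · have h := (hasDerivAt_const t Complex.I).div
      ((h1 j).hasDerivAt.sub (h1 k).hasDerivAt) (sub_ne_zero.2 (hdist j k hjk))
    simpa [laxL, laxLDeriv, hjk, Pi.div_def] using h

theorem laxM_commutator_diag {r : ℕ} (ω : ℂ) (lam : Fin r → ℝ → ℂ) (t : ℝ) (j : Fin r) :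
    (laxM lam t * laxL ω lam t - laxL ω lam t * laxM lam t) j j =
      Complex.I * ∑ m ∈ Finset.univ.erase j, 2 / (lam j t - lam m t) ^ 3 := by
  rw [Matrix.sub_apply, Matrix.mul_apply, Matrix.mul_apply, ← Finset.sum_sub_distrib,
    ← Finset.add_sum_erase _ _ (Finset.mem_univ j), mul_comm (laxM lam t j j), sub_self, zero_add,
    Finset.mul_sum]
  refine Finset.sum_congr rfl fun l hl => ?_
  have hlj : l ≠ j := Finset.ne_of_mem_erase hl
  simp only [laxM, laxL, Matrix.of_apply, if_neg hlj, if_neg hlj.symm]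
  rw [← neg_sub (lam j t) (lam l t)]
  generalize lam j t - lam l t = d
  rw [neg_sq, div_neg]
  ring

theorem laxM_commutator_offDiag {r : ℕ} (ω : ℂ) {lam : Fin r → ℝ → ℂ} {t : ℝ}
    (hdist : ∀ j k, j ≠ k → lam j t ≠ lam k t) {j k : Fin r} (hjk : j ≠ k) :
    (laxM lam t * laxL ω lam t - laxL ω lam t * laxM lam t) j k =
      (laxL ω lam t j j - laxL ω lam t k k) / (lam j t - lam k t) ^ 2 := by
  have hk : k ∈ Finset.univ.erase j := Finset.mem_erase.2 ⟨hjk.symm, Finset.mem_univ k⟩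
  have hj : j ∈ Finset.univ.erase k := Finset.mem_erase.2 ⟨hjk, Finset.mem_univ j⟩
  have hMj : laxM lam t j j = 1 / (lam j t - lam k t) ^ 2 +
      ∑ l ∈ (Finset.univ.erase j).erase k, 1 / (lam j t - lam l t) ^ 2 := by
    rw [Finset.add_sum_erase _ (fun l => 1 / (lam j t - lam l t) ^ 2) hk]
    simp [laxM]
  have hMk : laxM lam t k k = 1 / (lam j t - lam k t) ^ 2 +
      ∑ l ∈ (Finset.univ.erase j).erase k, 1 / (lam k t - lam l t) ^ 2 := by
    rw [Finset.erase_right_comm, ← neg_sub (lam k t), neg_sq,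
      Finset.add_sum_erase _ (fun l => 1 / (lam k t - lam l t) ^ 2) hj]
    simp [laxM]
  have hMjk : laxM lam t j k = -(1 / (lam j t - lam k t) ^ 2) := by simp [laxM, hjk]
  have hLjk : laxL ω lam t j k = Complex.I / (lam j t - lam k t) := by simp [laxL, hjk]
  have hrest : ∑ l ∈ (Finset.univ.erase j).erase k,
      (laxM lam t j l * laxL ω lam t l k - laxL ω lam t j l * laxM lam t l k) =
      Complex.I / (lam j t - lam k t) *
        (∑ l ∈ (Finset.univ.erase j).erase k, 1 / (lam k t - lam l t) ^ 2 -
          ∑ l ∈ (Finset.univ.erase j).erase k, 1 / (lam j t - lam l t) ^ 2) := by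
    rw [← Finset.sum_sub_distrib, Finset.mul_sum]
    refine Finset.sum_congr rfl fun l hl => ?_
    have hlk : l ≠ k := Finset.ne_of_mem_erase hl
    have hlj : l ≠ j := Finset.ne_of_mem_erase (Finset.mem_of_mem_erase hl)
    simp only [laxM, laxL, Matrix.of_apply, if_neg hlj.symm, if_neg hlk]
    have e1 := sub_ne_zero.2 (hdist j k hjk)
    have e2 := sub_ne_zero.2 (hdist j l hlj.symm)
    have e3 := sub_ne_zero.2 (hdist l k hlk)
    have e4 := sub_ne_zero.2 (hdist k l hlk.symm)
    field_simp
    ring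
  rw [Matrix.sub_apply, Matrix.mul_apply, Matrix.mul_apply, ← Finset.sum_sub_distrib,
    ← Finset.add_sum_erase _ _ (Finset.mem_univ j), ← Finset.add_sum_erase _ _ hk, hrest,
    hMj, hMk, hMjk, hLjk]
  ring

/-- The left-hand side of the modified Lax equation is the diagonal matrix of the defects in the
equations of motion. -/
theorem laxLDeriv_add_commutator {r : ℕ} (ω : ℂ) {lam : Fin r → ℝ → ℂ} {t : ℝ}
    (hdist : ∀ j k, j ≠ k → lam j t ≠ lam k t) :
    laxLDeriv ω lam t +
        Complex.I • (laxM lam t * laxL ω lam t - laxL ω lam t * laxM lam t) -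
        (Complex.I * ω) • laxL ω lam t =
      Matrix.diagonal fun k => deriv (deriv (lam k)) t + ω ^ 2 * lam k t -
        ∑ m ∈ Finset.univ.erase k, 2 / (lam k t - lam m t) ^ 3 := by
  ext j k
  rw [Matrix.sub_apply, Matrix.add_apply, Matrix.smul_apply, Matrix.smul_apply, smul_eq_mul,
    smul_eq_mul]
  by_cases hjk : j = k
  · subst hjk
    rw [laxM_commutator_diag, Matrix.diagonal_apply_eq]
    simp only [laxLDeriv, laxL, Matrix.of_apply, if_true]
    linear_combination (∑ m ∈ Finset.univ.erase j, 2 / (lam j t - lam m t) ^ 3 -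
      ω ^ 2 * lam j t) * Complex.I_sq
  · rw [laxM_commutator_offDiag ω hdist hjk, Matrix.diagonal_apply_ne _ hjk]
    simp only [laxLDeriv, laxL, Matrix.of_apply, if_true, if_neg hjk]
    have e := sub_ne_zero.2 (hdist j k hjk)
    field_simp
    ring

theorem lax_pair_calogero_moser (ω : ℂ) (r : ℕ) (hr : 1 ≤ r)
    (I : Set ℝ) (hIopen : IsOpen I) (hIconn : I.OrdConnected)
    (lam : Fin r → ℝ → ℂ)
    (hlam1 : ∀ k : Fin r, ∀ t ∈ I, DifferentiableAt ℝ (lam k) t)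
    (hlam2 : ∀ k : Fin r, ∀ t ∈ I, DifferentiableAt ℝ (deriv (lam k)) t)
    (hdist : ∀ t ∈ I, ∀ j k : Fin r, j ≠ k → lam j t ≠ lam k t) :
    CalogeroMoserEq ω I lam ↔ ModifiedLaxEq ω I (laxL ω lam) (laxM lam) := by
  have hL : ∀ t ∈ I, HasDerivAt (laxL ω lam) (laxLDeriv ω lam t) t := fun t ht =>
    hasDerivAt_laxL ω (fun k => hlam1 k t ht) (fun k => hlam2 k t ht) (hdist t ht)
  constructor
  · intro h t ht
    refine ⟨laxLDeriv ω lam t, hL t ht, ?_⟩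
    rw [laxLDeriv_add_commutator ω (hdist t ht), Matrix.diagonal_eq_zero]
    exact funext fun k => sub_eq_zero.2 (h k t ht)
  · intro h k t ht
    obtain ⟨L', hL', hEq⟩ := h t ht
    have hL'_eq : L' = laxLDeriv ω lam t := by
      ext i j
      exact (hasDerivAt_matrix_iff.1 hL' i j).unique (hasDerivAt_matrix_iff.1 (hL t ht) i j)
    rw [hL'_eq, laxLDeriv_add_commutator ω (hdist t ht),
      Matrix.diagonal_eq_zero] at hEq
    exact sub_eq_zero.1 (congrFun hEq k)
end
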